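/- arXiv:2010.01511 — 2 statements merged into one kernel-verified Lean document; each statement's English description precedes it below -/
import Mathlib

section
/- Let m ≥ 1 and n ≥ 1 be integers, and let a_1, …, a_n be integers with 0 ≤ a_j ≤ m for all j and a_n ≥ 1. If t is a real number with |t| < 1 satisfying tⁿ = a_1 t^{n−1} + a_2 t^{n−2} + ⋯ + a_n, then t < 0 and |t| ≥ (√(m² + 4) − m)/2. -/
/-!
Reverse the digits, so that `t ^ n = ∑ k < n, c k * t ^ k` with `0 ≤ c k ≤ m` and `1 ≤ c 0`.
If `0 ≤ t < 1`, the right-hand side is at least `c 0 ≥ 1 > t ^ n`, so `t < 0`. For negative `t`,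
only the odd powers contribute negatively, so the right-hand side is at least
`1 + m * (t + t ^ 3 + ⋯)`. If `t ^ 2 < 1 + m * t`, replacing `m * t` by `t ^ 2 - 1` telescopes this
to the even power `t ^ (2 * (n / 2))`, so the right-hand side exceeds `t ^ n`. Hence
`1 + m * t ≤ t ^ 2`, that is, `|t|` is at least the positive root of `x ^ 2 + m * x - 1`.
-/

open Finset

section OrderedRing

variable {R : Type*} [CommRing R] [LinearOrder R] [IsStrictOrderedRing R]
  {m t : R} {c : ℕ → R} {n : ℕ}

lemma one_le_sum_mul_pow_of_nonneg (hc : ∀ k, 0 ≤ c k) (hc₀ : 1 ≤ c 0) (hn : n ≠ 0)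
    (ht : 0 ≤ t) : 1 ≤ ∑ k ∈ range n, c k * t ^ k :=
  calc 1 ≤ c 0 * t ^ 0 := by simpa using hc₀
    _ ≤ ∑ k ∈ range n, c k * t ^ k :=
      single_le_sum (f := fun k ↦ c k * t ^ k) (fun k _ ↦ mul_nonneg (hc k) (pow_nonneg ht k))
        (mem_range.2 hn.pos)

lemma neg_of_pow_eq_sum_mul_pow (hc : ∀ k, 0 ≤ c k) (hc₀ : 1 ≤ c 0) (hn : n ≠ 0)
    (ht : t < 1) (h : t ^ n = ∑ k ∈ range n, c k * t ^ k) : t < 0 := by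
  by_contra! ht₀
  exact ((one_le_sum_mul_pow_of_nonneg hc hc₀ hn ht₀).trans_eq h.symm).not_gt
    (pow_lt_one₀ ht₀ ht hn)

lemma pow_add_two_lt_sum_mul_pow (hcm : ∀ k, c k ≤ m) (ht : t < 0) (hm : t ^ 2 < 1 + m * t)
    (hn : Even n) (h : t ^ n ≤ ∑ k ∈ range (n + 1), c k * t ^ k) :
    t ^ (n + 2) < ∑ k ∈ range (n + 2), c k * t ^ k :=
  calc t ^ (n + 2) = t ^ n * t ^ 2 := pow_add t n 2
    _ < t ^ n * (1 + m * t) := mul_lt_mul_of_pos_left hm (hn.pow_pos ht.ne)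
    _ = t ^ n + m * t ^ (n + 1) := by ring
    _ ≤ (∑ k ∈ range (n + 1), c k * t ^ k) + c (n + 1) * t ^ (n + 1) :=
      add_le_add h (mul_le_mul_of_nonpos_right (hcm _) (hn.add_one.pow_neg ht).le)
    _ = ∑ k ∈ range (n + 2), c k * t ^ k := (sum_range_succ _ _).symm

lemma pow_two_mul_le_sum_mul_pow (hc : ∀ k, 0 ≤ c k) (hcm : ∀ k, c k ≤ m) (hc₀ : 1 ≤ c 0)
    (ht : t < 0) (hm : t ^ 2 < 1 + m * t) (r : ℕ) :
    t ^ (2 * r) ≤ ∑ k ∈ range (2 * r + 1), c k * t ^ k := by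
  induction r with
  | zero => simpa using hc₀
  | succ r ih =>
    rw [mul_add_one, sum_range_succ]
    exact le_add_of_le_of_nonneg
      (pow_add_two_lt_sum_mul_pow hcm ht hm (even_two_mul r) ih).le
      (mul_nonneg (hc _) (((even_two_mul r).add even_two).pow_nonneg t))

lemma pow_lt_sum_mul_pow_of_neg (hc : ∀ k, 0 ≤ c k) (hcm : ∀ k, c k ≤ m) (hc₀ : 1 ≤ c 0)
    (hn : n ≠ 0) (ht : t < 0) (hm : t ^ 2 < 1 + m * t) :
    t ^ n < ∑ k ∈ range n, c k * t ^ k := by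
  have even_le := pow_two_mul_le_sum_mul_pow hc hcm hc₀ ht hm
  obtain ⟨k, rfl⟩ := Nat.exists_eq_succ_of_ne_zero hn
  obtain ⟨r, rfl | rfl⟩ := k.even_or_odd'
  · calc t ^ (2 * r + 1) < 0 := (even_two_mul r).add_one.pow_neg ht
      _ ≤ t ^ (2 * r) := (even_two_mul r).pow_nonneg t
      _ ≤ ∑ k ∈ range (2 * r + 1), c k * t ^ k := even_le r
  · exact pow_add_two_lt_sum_mul_pow hcm ht hm (even_two_mul r) (even_le r)

lemma one_add_mul_le_sq_of_pow_eq_sum_mul_pow (hc : ∀ k, 0 ≤ c k) (hcm : ∀ k, c k ≤ m)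
    (hc₀ : 1 ≤ c 0) (hn : n ≠ 0) (ht : t < 0) (h : t ^ n = ∑ k ∈ range n, c k * t ^ k) :
    1 + m * t ≤ t ^ 2 := by
  by_contra! hm
  exact (pow_lt_sum_mul_pow_of_neg hc hcm hc₀ hn ht hm).ne h

end OrderedRing

-- `Fin.ofNat n k` is `k % n`: the digits extend periodically to a sequence with the same bounds.
lemma sum_mul_pow_sub_eq_sum_range_rev {R : Type*} [Semiring R] {n : ℕ} [NeZero n]
    (a : Fin n → R) (t : R) :
    ∑ j : Fin n, a j * t ^ (n - 1 - (j : ℕ)) =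
      ∑ k ∈ range n, a (Fin.ofNat n k).rev * t ^ k := by
  rw [← Fin.sum_univ_eq_sum_range (fun k ↦ a (Fin.ofNat n k).rev * t ^ k),
    ← Equiv.sum_comp Fin.revPerm]
  refine sum_congr rfl fun j _ ↦ ?_
  have exponent_rev : n - 1 - (n - ((j : ℕ) + 1)) = j := by omega
  simp [exponent_rev]

lemma sqrt_sq_add_four_sub_div_two_le_iff {m x : ℝ} (hx : 0 ≤ x) :
    (√(m ^ 2 + 4) - m) / 2 ≤ x ↔ 1 ≤ x ^ 2 + m * x := by
  rw [div_le_iff₀ two_pos, sub_le_iff_le_add, Real.sqrt_le_iff]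
  constructor
  · rintro ⟨-, h⟩
    linarith
  · intro h
    have x_add_m_pos : 0 < x + m := pos_of_mul_pos_right (by linarith : 0 < x * (x + m)) hx
    constructor <;> linarith

theorem stmt_5_general (m : ℝ) (n : ℕ) (hn : 1 ≤ n) (a : Fin n → ℝ)
    (ha0 : ∀ j, 0 ≤ a j) (ham : ∀ j, a j ≤ m) (halast : 1 ≤ a ⟨n - 1, by omega⟩)
    (t : ℝ) (ht : t < 1) (heq : t ^ n = ∑ j : Fin n, a j * t ^ (n - 1 - (j : ℕ))) :
    t < 0 ∧ (√(m ^ 2 + 4) - m) / 2 ≤ |t| := by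
  have hn₀ : n ≠ 0 := Nat.one_le_iff_ne_zero.1 hn
  have : NeZero n := ⟨hn₀⟩
  let c : ℕ → ℝ := fun k ↦ a (Fin.ofNat n k).rev
  have hc (k) : 0 ≤ c k := ha0 _
  have hcm (k) : c k ≤ m := ham _
  have hc₀ : 1 ≤ c 0 := by simpa [c, Fin.rev] using halast
  have root : t ^ n = ∑ k ∈ range n, c k * t ^ k :=
    heq.trans (sum_mul_pow_sub_eq_sum_range_rev a t)
  have ht₀ : t < 0 := neg_of_pow_eq_sum_mul_pow hc hc₀ hn₀ ht root
  have hmt : 1 + m * t ≤ t ^ 2 :=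
    one_add_mul_le_sq_of_pow_eq_sum_mul_pow hc hcm hc₀ hn₀ ht₀ root
  refine ⟨ht₀, (sqrt_sq_add_four_sub_div_two_le_iff (abs_nonneg t)).2 ?_⟩
  rw [sq_abs, abs_of_neg ht₀]
  linarith

theorem stmt_5 (m n : ℕ) (hm : 1 ≤ m) (hn : 1 ≤ n) (a : Fin n → ℤ)
    (ha0 : ∀ j, 0 ≤ a j) (ham : ∀ j, a j ≤ (m : ℤ))
    (halast : 1 ≤ a ⟨n - 1, by omega⟩)
    (t : ℝ) (ht : |t| < 1)
    (heq : t ^ n = ∑ j : Fin n, (a j : ℝ) * t ^ (n - 1 - (j : ℕ))) :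
    t < 0 ∧ (Real.sqrt ((m : ℝ) ^ 2 + 4) - m) / 2 ≤ |t| :=
  stmt_5_general m n hn (fun j ↦ a j) (mod_cast ha0) (mod_cast ham) (mod_cast halast) t
    (lt_of_abs_lt ht) heq
end

section
/- Let g be a polynomial with real coefficients, let c = (√5 − 1)/2, suppose g(c)·g(−c) > 0, and let h > 0. Then there exists n₀ ∈ ℕ, depending only on g and h, such that for every polynomial f with integer coefficients all of absolute value at most h, and every n ≥ n₀, P_n(c)·P_n(−c) > 0, where P_n(x) = f(x)·xⁿ + g(x). -/
/-!
If `‖x‖ < 1` and the coefficients of `f` are bounded by `h`, then comparison with the geometric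
series gives `‖f(x)‖ ≤ h / (1 - ‖x‖)`, a bound that does not involve the degree of `f`. Hence
`f(x) xⁿ → 0` uniformly in such `f`, and from some `n` on the term `f(x) xⁿ` is too small to change
the sign of `g(x) ≠ 0`. Applied at `c` and at `-c`, this gives the theorem.
-/

open Filter Polynomial SignType

theorem sign_add_eq_right_of_abs_lt {α : Type*} [AddCommGroup α] [LinearOrder α]
    [IsOrderedAddMonoid α] {a b : α} (hab : |a| < |b|) : sign (a + b) = sign b := by
  have hb : b ≠ 0 := abs_pos.mp ((abs_nonneg a).trans_lt hab)
  rcases hb.lt_or_gt with hb | hb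
  · rw [abs_of_neg hb] at hab
    rw [sign_neg hb, sign_neg (lt_neg_iff_add_neg.mp (abs_lt.mp hab).2)]
  · rw [abs_of_pos hb] at hab
    rw [sign_pos hb, sign_pos (neg_lt_iff_pos_add.mp (abs_lt.mp hab).1)]

theorem abs_sqrt_five_sub_one_div_two_lt_one : |(√5 - 1) / 2| < 1 := by
  have eq_neg_goldenConj : (√5 - 1) / 2 = -Real.goldenConj := by rw [Real.goldenConj]; ring
  rw [eq_neg_goldenConj, abs_neg, abs_lt]
  exact ⟨Real.neg_one_lt_goldenConj, Real.goldenConj_neg.trans one_pos⟩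

section UniformBound

variable {A R : Type*} [Semiring A] [SeminormedRing R] [NormOneClass R] {x : R}

theorem norm_eval₂_le_of_norm_coeff_le (φ : A →+* R) (hx : ‖x‖ < 1) {h : ℝ} {f : A[X]}
    (hf : ∀ i, ‖φ (f.coeff i)‖ ≤ h) : ‖f.eval₂ φ x‖ ≤ h * (1 - ‖x‖)⁻¹ := by
  have h_nonneg : 0 ≤ h := (norm_nonneg _).trans (hf 0)
  rw [eval₂_eq_sum_range]
  calc ‖∑ i ∈ Finset.range (f.natDegree + 1), φ (f.coeff i) * x ^ i‖
      ≤ ∑ i ∈ Finset.range (f.natDegree + 1), h * ‖x‖ ^ i :=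
        norm_sum_le_of_le _ fun i _ => norm_mul_le_of_le (hf i) (norm_pow_le x i)
    _ ≤ h * (1 - ‖x‖)⁻¹ :=
        sum_le_hasSum _ (fun i _ => by positivity)
          ((hasSum_geometric_of_lt_one (norm_nonneg x) hx).mul_left h)

theorem eventually_forall_norm_eval₂_mul_pow_lt (φ : A →+* R) (hx : ‖x‖ < 1) (h : ℝ) {ε : ℝ}
    (hε : 0 < ε) :
    ∀ᶠ n : ℕ in atTop, ∀ f : A[X], (∀ i, ‖φ (f.coeff i)‖ ≤ h) → ‖f.eval₂ φ x * x ^ n‖ < ε := by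
  have tendsto_bound : Tendsto (fun n : ℕ => h * (1 - ‖x‖)⁻¹ * ‖x‖ ^ n) atTop (nhds 0) := by
    simpa only [mul_zero] using
      (tendsto_pow_atTop_nhds_zero_of_lt_one (norm_nonneg x) hx).const_mul (h * (1 - ‖x‖)⁻¹)
  filter_upwards [tendsto_bound.eventually_lt_const hε] with n hn f hf
  calc ‖f.eval₂ φ x * x ^ n‖ ≤ h * (1 - ‖x‖)⁻¹ * ‖x‖ ^ n :=
        norm_mul_le_of_le (norm_eval₂_le_of_norm_coeff_le φ hx hf) (norm_pow_le x n)
    _ < ε := hn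

end UniformBound

section Sign

variable {A : Type*} [Semiring A]

theorem eventually_forall_sign_eval₂_mul_pow_add_eq (φ : A →+* ℝ) {x b : ℝ} (hx : |x| < 1)
    (hb : b ≠ 0) (h : ℝ) :
    ∀ᶠ n : ℕ in atTop, ∀ f : A[X], (∀ i, |φ (f.coeff i)| ≤ h) →
      sign (f.eval₂ φ x * x ^ n + b) = sign b := by
  simp only [← Real.norm_eq_abs] at hx ⊢
  filter_upwards [eventually_forall_norm_eval₂_mul_pow_lt φ hx h (abs_pos.mpr hb)] with n hn f hf
  exact sign_add_eq_right_of_abs_lt (hn f hf)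

theorem stmt_7_general (φ : A →+* ℝ) (g : ℝ → ℝ) {x y : ℝ} (hx : |x| < 1) (hy : |y| < 1)
    (hg : 0 < g x * g y) (h : ℝ) :
    ∃ n₀ : ℕ, ∀ f : A[X], (∀ i, |φ (f.coeff i)| ≤ h) → ∀ n : ℕ, n₀ ≤ n →
      0 < (f.eval₂ φ x * x ^ n + g x) * (f.eval₂ φ y * y ^ n + g y) := by
  obtain ⟨n₀, hn₀⟩ := eventually_atTop.mp <|
    (eventually_forall_sign_eval₂_mul_pow_add_eq φ hx (left_ne_zero_of_mul hg.ne') h).and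
      (eventually_forall_sign_eval₂_mul_pow_add_eq φ hy (right_ne_zero_of_mul hg.ne') h)
  refine ⟨n₀, fun f hf n hn => ?_⟩
  obtain ⟨sign_x, sign_y⟩ := hn₀ n hn
  rwa [← sign_eq_one_iff, sign_mul, sign_x f hf, sign_y f hf, ← sign_mul, sign_eq_one_iff]

end Sign

theorem stmt_7 (g : Polynomial ℝ) (c : ℝ) (hc : c = (Real.sqrt 5 - 1) / 2)
    (hg : g.eval c * g.eval (-c) > 0) (h : ℤ) (hh : 0 < h) :
    ∃ n₀ : ℕ, ∀ f : Polynomial ℤ, (∀ i : ℕ, |f.coeff i| ≤ h) → ∀ n : ℕ, n₀ ≤ n →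
      ((Polynomial.aeval c f) * c ^ n + g.eval c) *
        ((Polynomial.aeval (-c) f) * (-c) ^ n + g.eval (-c)) > 0 := by
  have abs_c_lt : |c| < 1 := hc ▸ abs_sqrt_five_sub_one_div_two_lt_one
  obtain ⟨n₀, hn₀⟩ := stmt_7_general (algebraMap ℤ ℝ) (fun x => g.eval x) abs_c_lt
    ((abs_neg c).trans_lt abs_c_lt) hg h
  exact ⟨n₀, fun f hf => hn₀ f fun i => by simpa using mod_cast hf i⟩
end
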